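/- arXiv:2105.00986 — 2 statements merged into one kernel-verified Lean document; each statement's English description precedes it below -/
import Mathlib

section
/- Assume rank M = 2, let s = (s₁,s₂,s₃)ᵀ and t = (t₁,t₂,t₃)ᵀ be nonzero vectors spanning the null spaces of M and of Mᵀ respectively, set z = t₁x₁+t₂x₂+t₃x₃ ∈ A¹, and suppose s₁t₁² + s₂t₂² + s₃t₃² ≠ 0. Then for every n ≥ 1 one has Zⁿ = k·zⁿ + Bⁿ and zⁿ ∉ Bⁿ; in other words, the cohomology of (A, ∂) is the polynomial algebra k[⌈z⌉] on the degree-1 class ⌈z⌉. -/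
/-!
The squares `xᵢ²` are central in `A`, and `A` is free over the polynomial ring `R = k[x₁², x₂², x₃²]`
on the eight monomials `1, xᵢ, xᵢxⱼ, x₁x₂x₃` (`IsSkew.exists_comb`, `IsSkew.comb_injective`).  The
differential is `R`-linear, and in these coordinates it is the Koszul differential of the three
linear forms `fᵢ = ∂ xᵢ ∈ R` (`IsDiff.map_comb`).

As `rank M = 2`, the `fᵢ` span a two-dimensional space of linear forms, the only linear relation
between them being `Σ tᵢ fᵢ = 0`.  Choose coordinates `u₀, u₁, u₂` on `R` dual to a basis `a, b, s` of
`k³` extending `s`; then `f = u₀ M a + u₁ M b`, and the basis can be normalized by `M a × M b = t`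
(`exists_frame`).  Since `u₀, u₁` is a regular sequence, the Koszul homology is generated over
`R/(u₀, u₁)` by `1` and the class of `z = Σ tᵢ xᵢ` (`IsDiff.exists_normal_form`).  Moreover
`z² = Σ tᵢ² xᵢ²` is congruent to `(Σ sᵢ tᵢ²) u₂` modulo `u₀, u₁`, which act as zero on cohomology, so
when `Σ sᵢ tᵢ² ≠ 0` the powers of `z` span the cohomology (`IsDiff.ι_mem`, `IsDiff.ker_le`).
Projecting to a homogeneous component gives `Zⁿ = k zⁿ + Bⁿ` (`IsDiff.ker_inf_gr`).

Finally `zⁿ` is not a coboundary (`IsDiff.pow_ne`): there is a representation of `A` by scaled Pauli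
matrices in which `xᵢ²` acts as the scalar `sᵢ`.  It sends every `∂ xᵢ` to a component of `M s = 0`,
hence kills all coboundaries, but sends `z²` to the nonzero scalar `Σ sᵢ tᵢ²`.
-/


noncomputable section

/-- The skew-commutation relations `xᵢxⱼ + xⱼxᵢ = 0` (`i ≠ j`) among the three generators. -/
inductive SkewRel (k : Type) [Field k] :
    FreeAlgebra k (Fin 3) → FreeAlgebra k (Fin 3) → Prop
  | r01 : SkewRel k
      (FreeAlgebra.ι k 0 * FreeAlgebra.ι k 1 + FreeAlgebra.ι k 1 * FreeAlgebra.ι k 0) 0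
  | r12 : SkewRel k
      (FreeAlgebra.ι k 1 * FreeAlgebra.ι k 2 + FreeAlgebra.ι k 2 * FreeAlgebra.ι k 1) 0
  | r20 : SkewRel k
      (FreeAlgebra.ι k 2 * FreeAlgebra.ι k 0 + FreeAlgebra.ι k 0 * FreeAlgebra.ι k 2) 0

/-- The graded skew polynomial algebra `A = k⟨x₁,x₂,x₃⟩/(x₁x₂+x₂x₁, x₂x₃+x₃x₂, x₃x₁+x₁x₃)`. -/
abbrev SkewAlg (k : Type) [Field k] := RingQuot (SkewRel k)

/-- The generators `x₁, x₂, x₃` of `A` (indexed by `0, 1, 2`). -/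
def X (k : Type) [Field k] (i : Fin 3) : SkewAlg k :=
  RingQuot.mkAlgHom k (SkewRel k) (FreeAlgebra.ι k i)

/-- The degree-`n` homogeneous component `Aⁿ` of `A`: the `n`-th power of the span of the
generators (the algebra `A` is generated in degree `1` by `x₁,x₂,x₃`, and the defining
relations are homogeneous). -/
def deg (k : Type) [Field k] (n : ℕ) : Submodule k (SkewAlg k) :=
  (Submodule.span k {X k 0, X k 1, X k 2}) ^ n

/-- A differential on `A` determined by a matrix `M ∈ M₃(k)`: a `k`-linear map of degree `1`
squaring to zero, satisfying the graded Leibniz rule, with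
`∂(xᵢ) = mᵢ₁x₁² + mᵢ₂x₂² + mᵢ₃x₃²`. -/
structure DGDiff (k : Type) [Field k] (M : Matrix (Fin 3) (Fin 3) k) where
  d : SkewAlg k →ₗ[k] SkewAlg k
  grade : ∀ n : ℕ, ∀ a ∈ deg k n, d a ∈ deg k (n + 1)
  dd : ∀ a : SkewAlg k, d (d a) = 0
  leibniz : ∀ n : ℕ, ∀ a ∈ deg k n, ∀ b : SkewAlg k,
    d (a * b) = d a * b + ((-1 : k) ^ n) • (a * d b)
  dX : ∀ i : Fin 3,
    d (X k i) = M i 0 • (X k 0) ^ 2 + M i 1 • (X k 1) ^ 2 + M i 2 • (X k 2) ^ 2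

/-- `Zⁿ`, the space of cocycles of degree `n`. -/
def cocycle (k : Type) [Field k] {M : Matrix (Fin 3) (Fin 3) k} (D : DGDiff k M) (n : ℕ) :
    Submodule k (SkewAlg k) :=
  LinearMap.ker D.d ⊓ deg k n

/-- `Bⁿ`, the space of coboundaries of degree `n` (`B⁰ = 0`, `Bⁿ⁺¹ = ∂(Aⁿ)`). -/
def cobound (k : Type) [Field k] {M : Matrix (Fin 3) (Fin 3) k} (D : DGDiff k M) :
    ℕ → Submodule k (SkewAlg k)
  | 0 => ⊥
  | n + 1 => (deg k n).map D.d

/-! ### The skew polynomial algebra and its grading -/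

section Presentation

/-- `A` is a skew polynomial algebra on `x 0, x 1, x 2`: the `x i` anticommute pairwise, generate
`A`, and are universal with these properties.  The argument uses only this characterization of
`SkewAlg k`; it makes the generic `Ring` interface available. -/
structure IsSkew (k : Type) {A : Type} [Field k] [Ring A] [Algebra k A] (x : Fin 3 → A) :
    Prop where
  anticomm : ∀ i j, i ≠ j → x i * x j = -(x j * x i)
  adjoin : Algebra.adjoin k (Set.range x) = ⊤
  lift : ∀ (B : Type) [Ring B] [Algebra k B] (g : Fin 3 → B),
    (∀ i j, i ≠ j → g i * g j = -(g j * g i)) → ∃ φ : A →ₐ[k] B, ∀ i, φ (x i) = g i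

/-- The degree-`n` component of an algebra generated by `x 0, x 1, x 2` in degree one. -/
def gr (k : Type) {A : Type} [Field k] [Ring A] [Algebra k A] (x : Fin 3 → A) (n : ℕ) :
    Submodule k A :=
  Submodule.span k (Set.range x) ^ n

theorem anticomm_of_cyclic {B : Type} [Ring B] {g : Fin 3 → B}
    (h01 : g 0 * g 1 + g 1 * g 0 = 0) (h12 : g 1 * g 2 + g 2 * g 1 = 0)
    (h20 : g 2 * g 0 + g 0 * g 2 = 0) (i j : Fin 3) (h : i ≠ j) :
    g i * g j = -(g j * g i) := by
  fin_cases i <;> fin_cases j <;> first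
    | exact absurd rfl h
    | exact eq_neg_of_add_eq_zero_left h01
    | exact eq_neg_of_add_eq_zero_left h12
    | exact eq_neg_of_add_eq_zero_left h20
    | exact eq_neg_of_add_eq_zero_right h01
    | exact eq_neg_of_add_eq_zero_right h12
    | exact eq_neg_of_add_eq_zero_right h20

theorem isSkew_X (k : Type) [Field k] : IsSkew k (X k) where
  anticomm := anticomm_of_cyclic
    (by simpa [X] using RingQuot.mkAlgHom_rel k (SkewRel.r01 (k := k)))
    (by simpa [X] using RingQuot.mkAlgHom_rel k (SkewRel.r12 (k := k)))
    (by simpa [X] using RingQuot.mkAlgHom_rel k (SkewRel.r20 (k := k)))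
  adjoin := by
    have h := congrArg (Subalgebra.map (RingQuot.mkAlgHom k (SkewRel k)))
      (FreeAlgebra.adjoin_range_ι k (Fin 3))
    rw [AlgHom.map_adjoin, ← Set.range_comp, Algebra.map_top,
      (AlgHom.range_eq_top _).2 (RingQuot.mkAlgHom_surjective k _)] at h
    exact h
  lift B _ _ g hg := by
    refine ⟨RingQuot.liftAlgHom k ⟨FreeAlgebra.lift k g, ?_⟩, ?_⟩
    · intro a b h
      cases h <;> simp [hg 0 1 (by decide), hg 1 2 (by decide), hg 2 0 (by decide)]
    · intro i
      simp [X]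

end Presentation

section Generators

variable {k A : Type} [Field k] [Ring A] [Algebra k A] {x : Fin 3 → A}

/-- Induction principle: a left-multiplication-stable subspace of `A` containing `1` is `A`. -/
theorem IsSkew.eq_top_of_closed (hx : IsSkew k x) (N : Submodule k A) (h1 : 1 ∈ N)
    (hX : ∀ i, ∀ a ∈ N, x i * a ∈ N) : N = ⊤ := by
  have key : ∀ b : A, ∀ a ∈ N, b * a ∈ N := by
    intro b
    have hb : b ∈ Algebra.adjoin k (Set.range x) := by rw [hx.adjoin]; trivial
    induction hb using Algebra.adjoin_induction with
    | mem x hx => obtain ⟨i, rfl⟩ := hx; exact hX i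
    | algebraMap r => intro a ha; rw [← Algebra.smul_def]; exact N.smul_mem r ha
    | add x y _ _ hx hy => intro a ha; rw [add_mul]; exact N.add_mem (hx a ha) (hy a ha)
    | mul x y _ _ hx hy => intro a ha; rw [mul_assoc]; exact hx _ (hy a ha)
  exact Submodule.eq_top_iff'.2 fun b => by simpa using key b 1 h1

theorem mem_gr_one (i : Fin 3) : x i ∈ gr k x 1 := by
  rw [gr, pow_one]
  exact Submodule.subset_span ⟨i, rfl⟩

theorem mul_mem_gr {m n : ℕ} {a b : A} (ha : a ∈ gr k x m) (hb : b ∈ gr k x n) :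
    a * b ∈ gr k x (m + n) := by
  rw [gr, pow_add]
  exact Submodule.mul_mem_mul ha hb

/-- The squares of the generators are central. -/
theorem IsSkew.sq_comm (hx : IsSkew k x) (i : Fin 3) (a : A) : x i ^ 2 * a = a * x i ^ 2 := by
  have hgen : ∀ j, x i ^ 2 * x j = x j * x i ^ 2 := by
    intro j
    by_cases h : i = j
    · subst h; rw [← pow_succ, ← pow_succ']
    · rw [pow_two, mul_assoc, hx.anticomm i j h, mul_neg, ← mul_assoc, hx.anticomm i j h, neg_mul,
        neg_neg, mul_assoc]
  have hb : a ∈ Algebra.adjoin k (Set.range x) := by rw [hx.adjoin]; trivial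
  induction hb using Algebra.adjoin_induction with
  | mem x hx => obtain ⟨j, rfl⟩ := hx; exact hgen j
  | algebraMap r => exact (Algebra.commutes r _).symm
  | add x y _ _ hx hy => rw [mul_add, add_mul, hx, hy]
  | mul x y _ _ hx hy => rw [← mul_assoc, hx, mul_assoc, hy, mul_assoc]

theorem IsSkew.iSup_gr (hx : IsSkew k x) : ⨆ n, gr k x n = ⊤ := by
  apply hx.eq_top_of_closed
  · exact Submodule.mem_iSup_of_mem 0 (by rw [gr, pow_zero]; exact Submodule.one_le.1 le_rfl)
  · intro i a ha
    induction ha using Submodule.iSup_induction' with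
    | mem n y hy =>
      refine Submodule.mem_iSup_of_mem (1 + n) ?_
      exact mul_mem_gr (mem_gr_one i) hy
    | zero => simp
    | add x y _ _ hx hy => rw [mul_add]; exact add_mem hx hy

/-- Projections onto the homogeneous components exist.  They are the coefficients of the algebra
homomorphism `A → A[T]`, `x i ↦ x i * T`, which sends a homogeneous `a` of degree `m` to `a * T ^ m`. -/
theorem IsSkew.exists_proj (hx : IsSkew k x) : ∃ π : ℕ → A →ₗ[k] A,
    ∀ m n a, a ∈ gr k x m → π n a = if m = n then a else 0 := by
  obtain ⟨φ, hφ⟩ := hx.lift (Polynomial A) (fun i => Polynomial.monomial 1 (x i)) (by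
    intro i j h
    rw [Polynomial.monomial_mul_monomial, Polynomial.monomial_mul_monomial, hx.anticomm i j h,
      map_neg])
  refine ⟨fun n => ⟨⟨fun a => (φ a).coeff n, by simp⟩, by simp⟩, ?_⟩
  intro m n a ha
  have key : φ a = Polynomial.monomial m a := by
    rw [gr] at ha
    induction ha using Submodule.pow_induction_on_left' with
    | algebraMap r => rw [AlgHom.commutes]; rfl
    | add x y i _ _ hx hy => simp [hx, hy]
    | mem_mul m hm i y hy h =>
      have : φ m = Polynomial.monomial 1 m := by
        induction hm using Submodule.span_induction with
        | mem y hy => obtain ⟨i, rfl⟩ := hy; exact hφ i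
        | zero => simp
        | add x y _ _ hx hy => simp [hx, hy]
        | smul r x _ hx => rw [map_smul, hx, Polynomial.smul_monomial]
      rw [map_mul, h, this, Polynomial.monomial_mul_monomial, add_comm]
  change (φ a).coeff n = _
  rw [key, Polynomial.coeff_monomial]

end Generators

/-! ### Syzygies of three linear forms of rank two -/

section Syzygies

variable {R : Type} [CommRing R] {u₀ u₁ : R} {a b n : Fin 3 → R}

/-- Exactness of the Koszul complex of `f = u₀ a + u₁ b` in degree two: `q × f = 0` implies
`q ∈ R f`. Here `n` is a vector with `n · (a × b) = 1`, and `u₀, u₁` have only trivial syzygies. -/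
theorem exists_smul_of_cross_eq_zero [IsDomain R] (hu : u₀ ≠ 0)
    (syz : ∀ p q, u₀ * p + u₁ * q = 0 → ∃ c, p = u₁ * c ∧ q = -(u₀ * c))
    (hn : n 0 * (a 1 * b 2 - a 2 * b 1) + n 1 * (a 2 * b 0 - a 0 * b 2)
      + n 2 * (a 0 * b 1 - a 1 * b 0) = 1)
    {f : Fin 3 → R} (hf : ∀ i, f i = u₀ * a i + u₁ * b i) {q : Fin 3 → R}
    (h0 : q 1 * f 2 - q 2 * f 1 = 0) (h1 : q 2 * f 0 - q 0 * f 2 = 0)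
    (h2 : q 0 * f 1 - q 1 * f 0 = 0) : ∃ c, ∀ i, q i = c * f i := by
  simp only [hf] at h0 h1 h2
  have ht : q 0 * (a 1 * b 2 - a 2 * b 1) + q 1 * (a 2 * b 0 - a 0 * b 2)
      + q 2 * (a 0 * b 1 - a 1 * b 0) = 0 := by
    apply mul_left_cancel₀ hu
    linear_combination b 0 * h0 + b 1 * h1 + b 2 * h2
  obtain ⟨c, hα, hβ⟩ := syz
    (-(q 0 * (n 1 * a 2 - n 2 * a 1) + q 1 * (n 2 * a 0 - n 0 * a 2)
      + q 2 * (n 0 * a 1 - n 1 * a 0)))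
    (q 0 * (b 1 * n 2 - b 2 * n 1) + q 1 * (b 2 * n 0 - b 0 * n 2)
      + q 2 * (b 0 * n 1 - b 1 * n 0))
    (by linear_combination n 0 * h0 + n 1 * h1 + n 2 * h2)
  refine ⟨-c, fun i => ?_⟩
  rw [hf]
  fin_cases i <;> simp only [Fin.zero_eta, Fin.mk_one, Fin.reduceFinMk]
  · linear_combination (-q 0) * hn + n 0 * ht - b 0 * hα + a 0 * hβ
  · linear_combination (-q 1) * hn + n 1 * ht - b 1 * hα + a 1 * hβ
  · linear_combination (-q 2) * hn + n 2 * ht - b 2 * hα + a 2 * hβ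

/-- The cycles `v · f = 0` of the Koszul complex of `f = u₀ a + u₁ b` in degree one: up to
boundaries `w × f` they are multiples of the constant vector `a × b`. -/
theorem exists_cross_of_dot_eq_zero
    (syz : ∀ p q, u₀ * p + u₁ * q = 0 → ∃ c, p = u₁ * c ∧ q = -(u₀ * c))
    (hn : n 0 * (a 1 * b 2 - a 2 * b 1) + n 1 * (a 2 * b 0 - a 0 * b 2)
      + n 2 * (a 0 * b 1 - a 1 * b 0) = 1)
    {f : Fin 3 → R} (hf : ∀ i, f i = u₀ * a i + u₁ * b i) {v : Fin 3 → R}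
    (h : v 0 * f 0 + v 1 * f 1 + v 2 * f 2 = 0) : ∃ (p : R) (w : Fin 3 → R),
      v 0 = w 1 * f 2 - w 2 * f 1 + p * (a 1 * b 2 - a 2 * b 1) ∧
      v 1 = w 2 * f 0 - w 0 * f 2 + p * (a 2 * b 0 - a 0 * b 2) ∧
      v 2 = w 0 * f 1 - w 1 * f 0 + p * (a 0 * b 1 - a 1 * b 0) := by
  simp only [hf] at h ⊢
  obtain ⟨c, hα, hβ⟩ := syz (v 0 * a 0 + v 1 * a 1 + v 2 * a 2)
    (v 0 * b 0 + v 1 * b 1 + v 2 * b 2) (by linear_combination h)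
  refine ⟨v 0 * n 0 + v 1 * n 1 + v 2 * n 2, fun i => -c * n i, ?_, ?_, ?_⟩
  · linear_combination (-v 0) * hn + (b 1 * n 2 - b 2 * n 1) * hα + (n 1 * a 2 - n 2 * a 1) * hβ
  · linear_combination (-v 1) * hn + (b 2 * n 0 - b 0 * n 2) * hα + (n 2 * a 0 - n 0 * a 2) * hβ
  · linear_combination (-v 2) * hn + (b 0 * n 1 - b 1 * n 0) * hα + (n 0 * a 1 - n 1 * a 0) * hβ

end Syzygies

/-! ### Freeness over the central subring of squares -/

section Freeness

/-- Left multiplication by the three generators on the Clifford algebra of the quadratic form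
`Y 0, Y 1, Y 2` over `R`, in coordinates with respect to the basis
`1, x₀, x₁, x₂, x₁x₂, x₂x₀, x₀x₁, x₀x₁x₂`. -/
def cliffFun {R : Type} [CommRing R] (Y : Fin 3 → R) : Fin 3 → (Fin 8 → R) → (Fin 8 → R)
  | 0, e => ![Y 0 * e 1, e 0, Y 0 * e 6, -(Y 0 * e 5), Y 0 * e 7, -e 3, e 2, e 4]
  | 1, e => ![Y 1 * e 2, -(Y 1 * e 6), e 0, Y 1 * e 4, e 3, Y 1 * e 7, -e 1, e 5]
  | 2, e => ![Y 2 * e 3, Y 2 * e 5, -(Y 2 * e 4), e 0, -e 2, e 1, Y 2 * e 7, e 6]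

/-- `cliffFun` as a family of `R`-linear endomorphisms. -/
def cliffOp {R : Type} [CommRing R] (Y : Fin 3 → R) (i : Fin 3) : Module.End R (Fin 8 → R) where
  toFun := cliffFun Y i
  map_add' e e' := by
    fin_cases i <;> ext j <;> fin_cases j <;> simp [cliffFun] <;> ring
  map_smul' r e := by
    fin_cases i <;> ext j <;> fin_cases j <;> simp [cliffFun] <;> ring

/-- The element of `A` with coordinates `e` over the central subring `ι R`, with respect to
`1, x₀, x₁, x₂, x₁x₂, x₂x₀, x₀x₁, x₀x₁x₂`. -/
def comb {R A : Type} [CommRing R] [Ring A] (ι : R → A) (x : Fin 3 → A) (e : Fin 8 → R) : A :=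
  ι (e 0) + ι (e 1) * x 0 + ι (e 2) * x 1 + ι (e 3) * x 2 + ι (e 4) * (x 1 * x 2)
    + ι (e 5) * (x 2 * x 0) + ι (e 6) * (x 0 * x 1) + ι (e 7) * (x 0 * (x 1 * x 2))

variable {k A R : Type} [Field k] [Ring A] [Algebra k A] {x : Fin 3 → A}
  [CommRing R] [Algebra k R] {Y : Fin 3 → R} {ι : R →ₐ[k] A}

theorem IsSkew.ι_comm (hx : IsSkew k x) (hY : Algebra.adjoin k (Set.range Y) = ⊤)
    (hι : ∀ i, ι (Y i) = x i ^ 2) (p : R) (a : A) : ι p * a = a * ι p := by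
  have hb : p ∈ Algebra.adjoin k (Set.range Y) := by rw [hY]; trivial
  induction hb using Algebra.adjoin_induction with
  | mem y hy => obtain ⟨j, rfl⟩ := hy; rw [hι]; exact hx.sq_comm j a
  | algebraMap r => rw [AlgHom.commutes]; exact Algebra.commutes r a
  | add x y _ _ hx hy => rw [map_add, mul_add, add_mul, hx, hy]
  | mul x y _ _ hx hy => rw [map_mul, mul_assoc, hy, ← mul_assoc, hx, mul_assoc]

/-- Every element of `A` has coordinates over `ι R`. -/
theorem IsSkew.exists_comb (hx : IsSkew k x) (hY : Algebra.adjoin k (Set.range Y) = ⊤)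
    (hι : ∀ i, ι (Y i) = x i ^ 2) (a : A) : ∃ e, a = comb ι x e := by
  let N : Submodule k A :=
    { carrier := {a | ∃ e, a = comb ι x e}
      zero_mem' := ⟨0, by simp [comb]⟩
      add_mem' := by
        rintro _ _ ⟨e, rfl⟩ ⟨e', rfl⟩
        refine ⟨e + e', ?_⟩
        simp only [comb, Pi.add_apply, map_add, add_mul]
        abel
      smul_mem' := by
        rintro r _ ⟨e, rfl⟩
        refine ⟨r • e, ?_⟩
        simp only [comb, Pi.smul_apply, map_smul, smul_mul_assoc, smul_add] }
  have hN : N = ⊤ := by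
    refine hx.eq_top_of_closed N ⟨![1, 0, 0, 0, 0, 0, 0, 0], by simp [comb]⟩ ?_
    rintro i _ ⟨e, rfl⟩
    refine ⟨cliffFun Y i e, ?_⟩
    have hc := fun p j => hx.ι_comm hY hι p (x j)
    have hl : ∀ j p (b : A), x j * (ι p * b) = ι p * (x j * b) := fun j p b => by
      rw [← mul_assoc, ← hc, mul_assoc]
    have h10 := hx.anticomm 1 0 (by decide)
    have h20 := hx.anticomm 2 0 (by decide)
    have h21 := hx.anticomm 2 1 (by decide)
    have l10 : ∀ b, x 1 * (x 0 * b) = -(x 0 * (x 1 * b)) := fun b => by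
      rw [← mul_assoc, h10, neg_mul, mul_assoc]
    have l20 : ∀ b, x 2 * (x 0 * b) = -(x 0 * (x 2 * b)) := fun b => by
      rw [← mul_assoc, h20, neg_mul, mul_assoc]
    have l21 : ∀ b, x 2 * (x 1 * b) = -(x 1 * (x 2 * b)) := fun b => by
      rw [← mul_assoc, h21, neg_mul, mul_assoc]
    have hs : ∀ j p (b : A), ι (Y j * p) * b = ι p * (x j * (x j * b)) := fun j p b => by
      rw [map_mul, hx.ι_comm hY hι (Y j), hι, mul_assoc, pow_two, mul_assoc]
    have hs' : ∀ j p, ι (Y j * p) = ι p * (x j * x j) := fun j p => by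
      simpa using hs j p 1
    fin_cases i <;>
      simp [comb, cliffFun, mul_add, mul_assoc, hl, hs', ← hc, h10, h20, h21, l10, l20, l21] <;> abel
  have : a ∈ N := by rw [hN]; trivial
  exact this

/-- The coordinates over `ι R` are unique: they are recovered by letting `A` act on the Clifford
algebra through `cliffOp`. -/
theorem IsSkew.comb_injective (hx : IsSkew k x) (hY : Algebra.adjoin k (Set.range Y) = ⊤)
    (hι : ∀ i, ι (Y i) = x i ^ 2) {e : Fin 8 → R} (he : comb ι x e = 0) : e = 0 := by
  obtain ⟨ρ, hρ⟩ := hx.lift (Module.End R (Fin 8 → R)) (cliffOp Y) (by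
    refine anticomm_of_cyclic ?_ ?_ ?_ <;>
    · refine LinearMap.ext fun e => ?_
      ext j
      fin_cases j <;> simp [cliffOp, cliffFun] <;> ring)
  have hρι : ∀ p e, ρ (ι p) e = p • e := by
    intro p
    have hb : p ∈ Algebra.adjoin k (Set.range Y) := by rw [hY]; trivial
    induction hb using Algebra.adjoin_induction with
    | mem y hy =>
      obtain ⟨j, rfl⟩ := hy
      intro e
      rw [hι, map_pow, hρ, pow_two]
      ext l
      fin_cases j <;> fin_cases l <;> simp [cliffOp, cliffFun]
    | algebraMap r => intro e; rw [AlgHom.commutes, AlgHom.commutes]; simp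
    | add x y _ _ hx hy => intro e; simp [hx, hy, add_smul]
    | mul x y _ _ hx hy => intro e; simp [hx, hy, mul_smul]
  have h := congrArg (fun a => ρ a ![1, 0, 0, 0, 0, 0, 0, 0]) he
  simp only [comb, map_add, map_mul, hρ, LinearMap.add_apply, Module.End.mul_apply, hρι, map_zero,
    LinearMap.zero_apply] at h
  rw [← h]
  ext j
  fin_cases j <;> simp [cliffOp, cliffFun]

end Freeness

/-! ### A basis adapted to the matrix -/

section LinearAlgebra

open Matrix in
/-- For `M` of rank two with kernel spanned by `s` and left kernel spanned by `t`, the vector `s`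
extends to a basis `a, b, s` normalized by `M a × M b = t`. -/
theorem exists_frame {k : Type} [Field k] (M : Matrix (Fin 3) (Fin 3) k) (hrank : M.rank = 2)
    (s t : Fin 3 → k) (hs0 : s ≠ 0) (ht0 : t ≠ 0) (hs : M *ᵥ s = 0) (ht : Mᵀ *ᵥ t = 0) :
    ∃ a b : Fin 3 → k, LinearIndependent k ![a, b, s] ∧ crossProduct (M *ᵥ a) (M *ᵥ b) = t := by
  have h1 : LinearIndependent k ![s] := by
    simpa [linearIndependent_unique_iff] using hs0
  obtain ⟨b, h2⟩ := exists_linearIndependent_cons_of_lt_finrank h1 (by simp)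
  obtain ⟨a, h3⟩ := exists_linearIndependent_cons_of_lt_finrank h2 (by simp)
  change LinearIndependent k ![a, b, s] at h3
  have hker : Module.finrank k (LinearMap.ker M.mulVecLin) = 1 := by
    have := M.mulVecLin.finrank_range_add_finrank_ker
    rw [← Matrix.rank, hrank] at this
    simp at this
    omega
  have hspan := (finrank_eq_one_iff_of_nonzero'
    (⟨s, by simpa using hs⟩ : LinearMap.ker M.mulVecLin) (by simpa using hs0)).1 hker
  have hli : LinearIndependent k ![M *ᵥ a, M *ᵥ b] := by
    rw [LinearIndependent.pair_iff]
    intro α β h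
    obtain ⟨c, hc⟩ := hspan ⟨α • a + β • b, by
      simpa [Matrix.mulVec_add, Matrix.mulVec_smul] using h⟩
    have hc' : c • s = α • a + β • b := congrArg Subtype.val hc
    have := Fintype.linearIndependent_iff.1 h3 ![α, β, -c] (by
      simp [Fin.sum_univ_three, hc'])
    exact ⟨this 0, this 1⟩
  have hcross := crossProduct_ne_zero_iff_linearIndependent.2 hli
  -- `t` is orthogonal to the image of `M`, hence proportional to `M a × M b`
  have horth : ∀ v, t ⬝ᵥ (M *ᵥ v) = 0 := fun v => by
    rw [Matrix.dotProduct_mulVec, ← Matrix.mulVec_transpose, ht, zero_dotProduct]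
  have hpar : ¬ LinearIndependent k ![crossProduct (M *ᵥ a) (M *ᵥ b), t] := by
    rw [← crossProduct_ne_zero_iff_linearIndependent, not_not]
    have ha := horth a
    have hb := horth b
    generalize M *ᵥ a = p at *
    generalize M *ᵥ b = q at *
    simp only [dotProduct, Fin.sum_univ_three] at ha hb
    rw [cross_apply, cross_apply]
    ext i
    fin_cases i <;> simp
    · linear_combination q 0 * ha - p 0 * hb
    · linear_combination q 1 * ha - p 1 * hb
    · linear_combination q 2 * ha - p 2 * hb
  rw [LinearIndependent.pair_iff' hcross] at hpar
  push Not at hpar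
  obtain ⟨μ, hμ⟩ := hpar
  have hμ0 : μ ≠ 0 := by
    rintro rfl
    exact ht0 (by rw [← hμ, zero_smul])
  refine ⟨μ • a, b, ?_, ?_⟩
  · rw [Fintype.linearIndependent_iff] at h3 ⊢
    intro g hg
    have := h3 ![g 0 * μ, g 1, g 2] (by
      simpa [Fin.sum_univ_three, smul_smul] using hg)
    intro i
    fin_cases i
    · simpa [hμ0] using this 0
    · exact this 1
    · exact this 2
  · rw [Matrix.mulVec_smul, map_smul, LinearMap.smul_apply, hμ]

end LinearAlgebra

/-! ### The differential: non-exactness of powers, Koszul form -/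

section Differential

variable {k A : Type} [Field k] [Ring A] [Algebra k A] {x : Fin 3 → A}

/-- The axioms of `DGDiff` for a linear map `d` on an algebra with generators `x 0, x 1, x 2`. -/
structure IsDiff (M : Matrix (Fin 3) (Fin 3) k) (x : Fin 3 → A) (d : A →ₗ[k] A) : Prop where
  grade : ∀ n : ℕ, ∀ a ∈ gr k x n, d a ∈ gr k x (n + 1)
  dd : ∀ a, d (d a) = 0
  leibniz : ∀ n : ℕ, ∀ a ∈ gr k x n, ∀ b, d (a * b) = d a * b + ((-1 : k) ^ n) • (a * d b)
  dX : ∀ i, d (x i) = M i 0 • x 0 ^ 2 + M i 1 • x 1 ^ 2 + M i 2 • x 2 ^ 2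

variable {M : Matrix (Fin 3) (Fin 3) k} {d : A →ₗ[k] A}

theorem IsDiff.leibniz_one (hd : IsDiff M x d) {a : A} (ha : a ∈ gr k x 1) (b : A) :
    d (a * b) = d a * b - a * d b := by
  rw [hd.leibniz 1 a ha]
  simp [sub_eq_add_neg]

theorem IsDiff.map_one (hd : IsDiff M x d) : d 1 = 0 := by
  have := hd.leibniz 0 1 (by rw [gr, pow_zero]; exact Submodule.one_le.1 le_rfl) 1
  simpa using this

/-- The cross terms of the square of a combination of anticommuting elements cancel. -/
theorem sq_of_anticomm {B : Type} [Ring B] [Algebra k B] {g : Fin 3 → B}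
    (hg : ∀ i j, i ≠ j → g i * g j = -(g j * g i)) (t : Fin 3 → k) :
    (t 0 • g 0 + t 1 • g 1 + t 2 • g 2) ^ 2
      = t 0 ^ 2 • g 0 ^ 2 + t 1 ^ 2 • g 1 ^ 2 + t 2 ^ 2 • g 2 ^ 2 := by
  simp only [pow_two, mul_add, add_mul, smul_mul_assoc, mul_smul_comm,
    hg 1 0 (by decide), hg 2 0 (by decide), hg 2 1 (by decide)]
  module

/-- An algebra homomorphism that turns the squares `x i ^ 2` into scalars `s i` with `M s = 0`
annihilates all coboundaries. -/
theorem IsDiff.hom_eq_zero (hx : IsSkew k x) (hd : IsDiff M x d) {s : Fin 3 → k}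
    (hs : M.mulVec s = 0) {B : Type} [Ring B] [Algebra k B] (φ : A →ₐ[k] B)
    (hφ : ∀ i, φ (x i) ^ 2 = algebraMap k B (s i)) (a : A) : φ (d a) = 0 := by
  have : LinearMap.ker (φ.toLinearMap ∘ₗ d) = ⊤ := by
    refine hx.eq_top_of_closed _ ?_ ?_
    · simp [hd.map_one]
    · intro i a ha
      have ha' : φ (d a) = 0 := ha
      change φ (d (x i * a)) = 0
      have hi : M i 0 * s 0 + M i 1 * s 1 + M i 2 * s 2 = 0 := by
        have := congrFun hs i
        simpa [Matrix.mulVec, dotProduct, Fin.sum_univ_three] using this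
      have h0 : φ (d (x i)) = 0 := by
        rw [hd.dX]
        simp only [map_add, map_smul, map_pow, hφ]
        simp only [Algebra.smul_def, ← map_mul, ← map_add, hi, map_zero]
      rw [hd.leibniz_one (mem_gr_one i), map_sub, map_mul, map_mul, ha', h0]
      simp
  have ha : a ∈ LinearMap.ker (φ.toLinearMap ∘ₗ d) := by rw [this]; trivial
  exact ha

/-- No power of `z` is a coboundary: scaled Pauli matrices give a representation of `A` in which
`x i ^ 2` acts as `s i`.  It annihilates coboundaries, while `z ^ 2` acts as a nonzero scalar. -/
theorem IsDiff.pow_ne (hx : IsSkew k x) (hd : IsDiff M x d) [IsAlgClosed k] {s t : Fin 3 → k}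
    (hs : M.mulVec s = 0) (hst : s 0 * (t 0) ^ 2 + s 1 * (t 1) ^ 2 + s 2 * (t 2) ^ 2 ≠ 0)
    {z : A} (hz : z = t 0 • x 0 + t 1 • x 1 + t 2 • x 2) (n : ℕ) (a : A) : d a ≠ z ^ n := by
  intro h
  obtain ⟨ω, hω⟩ := IsAlgClosed.exists_pow_nat_eq (-1 : k) (n := 2) (by norm_num)
  choose r hr using fun i => IsAlgClosed.exists_pow_nat_eq (s i) (n := 2) (by norm_num)
  let g : Fin 3 → Matrix (Fin 2) (Fin 2) k :=
    ![!![0, r 0; r 0, 0], !![0, -(ω * r 1); ω * r 1, 0], !![r 2, 0; 0, -r 2]]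
  have hg2 : ∀ i, g i ^ 2 = algebraMap k _ (s i) := by
    intro i
    rw [← hr i, pow_two, Matrix.algebraMap_eq_diagonal]
    ext p q
    fin_cases i <;> fin_cases p <;> fin_cases q <;>
      simp [g, Matrix.mul_apply, Fin.sum_univ_two, Matrix.diagonal] <;>
      first | ring1 | linear_combination (-(r 1) ^ 2) * hω
  have hanti : ∀ i j, i ≠ j → g i * g j = -(g j * g i) := by
    refine anticomm_of_cyclic ?_ ?_ ?_ <;>
    · ext p q
      fin_cases p <;> fin_cases q <;> simp [g] <;> ring
  obtain ⟨φ, hφ⟩ := hx.lift _ g hanti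
  have h0 : φ (z ^ n) = 0 := by
    rw [← h]
    exact hd.hom_eq_zero hx hs φ (fun i => by rw [hφ, hg2]) a
  have hz2 : φ z ^ 2 = algebraMap k _ (s 0 * (t 0) ^ 2 + s 1 * (t 1) ^ 2 + s 2 * (t 2) ^ 2) := by
    have := sq_of_anticomm (k := k) hanti t
    simp only [hg2] at this
    rw [hz]
    simp only [map_add, map_smul, hφ]
    rw [this]
    simp only [Algebra.smul_def, ← map_mul, ← map_add]
    congr 1
    ring
  have h00 : (φ z ^ 2) ^ n = 0 := by
    rw [← pow_mul, mul_comm, pow_mul, ← map_pow, h0, zero_pow two_ne_zero]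
  rw [hz2, ← map_pow, map_eq_zero_iff _ (algebraMap k _).injective] at h00
  exact pow_ne_zero n hst h00

section Coordinates

variable {R : Type} [CommRing R] [Algebra k R] {Y : Fin 3 → R} {ι : R →ₐ[k] A} {f : Fin 3 → R}

/-- `d` is linear over the central subring `ι R` generated by the squares `x i ^ 2`. -/
theorem IsDiff.map_ι_mul (hx : IsSkew k x) (hd : IsDiff M x d)
    (hY : Algebra.adjoin k (Set.range Y) = ⊤) (hι : ∀ i, ι (Y i) = x i ^ 2)
    (hf : ∀ i, d (x i) = ι (f i)) (p : R) (b : A) : d (ι p * b) = ι p * d b := by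
  have hb : p ∈ Algebra.adjoin k (Set.range Y) := by rw [hY]; trivial
  induction hb using Algebra.adjoin_induction generalizing b with
  | mem y hy =>
    obtain ⟨j, rfl⟩ := hy
    rw [hι, pow_two, mul_assoc, hd.leibniz_one (mem_gr_one j), hd.leibniz_one (mem_gr_one j), hf,
      mul_sub, ← mul_assoc, ← mul_assoc, hx.ι_comm hY hι (f j) (x j)]
    simp [mul_assoc]
  | algebraMap r => rw [AlgHom.commutes, ← Algebra.smul_def, ← Algebra.smul_def, map_smul]
  | add x y _ _ hx hy => rw [map_add, add_mul, add_mul, map_add, hx, hy]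
  | mul x y _ _ hx hy => rw [map_mul ι, mul_assoc, hx, hy, mul_assoc]

/-- In coordinates over `ι R`, `d` is the Koszul differential of the sequence `f`. -/
theorem IsDiff.map_comb (hx : IsSkew k x) (hd : IsDiff M x d)
    (hY : Algebra.adjoin k (Set.range Y) = ⊤) (hι : ∀ i, ι (Y i) = x i ^ 2)
    (hf : ∀ i, d (x i) = ι (f i)) (e : Fin 8 → R) :
    d (comb ι x e) = comb ι x ![e 1 * f 0 + e 2 * f 1 + e 3 * f 2,
      e 5 * f 2 - e 6 * f 1, e 6 * f 0 - e 4 * f 2, e 4 * f 1 - e 5 * f 0,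
      e 7 * f 0, e 7 * f 1, e 7 * f 2, 0] := by
  have h1 : ∀ p, d (ι p) = 0 := fun p => by
    simpa [hd.map_one] using hd.map_ι_mul hx hY hι hf p 1
  have hc := fun p j => hx.ι_comm hY hι p (x j)
  have hl : ∀ j p (b : A), x j * (ι p * b) = ι p * (x j * b) := fun j p b => by
    rw [← mul_assoc, ← hc, mul_assoc]
  have h20 := hx.anticomm 2 0 (by decide)
  simp only [comb, map_add, h1, hd.map_ι_mul hx hY hι hf, hd.leibniz_one (mem_gr_one _), hf]
  simp [sub_mul, mul_sub, ← hc, hl, mul_assoc, h20]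
  abel

end Coordinates

end Differential

/-! ### Cocycles up to coboundaries -/

section Cocycles

variable {k A R : Type} [Field k] [Ring A] [Algebra k A] {x : Fin 3 → A}
  {M : Matrix (Fin 3) (Fin 3) k} {d : A →ₗ[k] A}
  [CommRing R] [Algebra k R] {Y : Fin 3 → R} {ι : R →ₐ[k] A} {f : Fin 3 → R}

/-- Up to coboundaries, every cocycle lies in `ι R + ι R z` with `z = Σ tᵢ xᵢ`, `t = a × b`. -/
theorem IsDiff.exists_normal_form [IsDomain R] (hx : IsSkew k x) (hd : IsDiff M x d)
    (hY : Algebra.adjoin k (Set.range Y) = ⊤) (hι : ∀ i, ι (Y i) = x i ^ 2)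
    (hdf : ∀ i, d (x i) = ι (f i)) {u₀ u₁ : R} (hu : u₀ ≠ 0)
    (syz : ∀ p q, u₀ * p + u₁ * q = 0 → ∃ c, p = u₁ * c ∧ q = -(u₀ * c))
    {a b n : Fin 3 → R}
    (hn : n 0 * (a 1 * b 2 - a 2 * b 1) + n 1 * (a 2 * b 0 - a 0 * b 2)
      + n 2 * (a 0 * b 1 - a 1 * b 0) = 1)
    (hf : ∀ i, f i = u₀ * a i + u₁ * b i) {y : A} (hy : d y = 0) :
    ∃ (p₀ p₁ : R) (y' : A), y = ι p₀ + ι p₁ * (ι (a 1 * b 2 - a 2 * b 1) * x 0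
      + ι (a 2 * b 0 - a 0 * b 2) * x 1 + ι (a 0 * b 1 - a 1 * b 0) * x 2) + d y' := by
  obtain ⟨e, rfl⟩ := hx.exists_comb hY hι y
  rw [hd.map_comb hx hY hι hdf] at hy
  have h := fun i => congrFun (hx.comb_injective hY hι hy) i
  obtain ⟨c, hc⟩ := exists_smul_of_cross_eq_zero hu syz hn hf (q := ![e 4, e 5, e 6])
    (h 1) (h 2) (h 3)
  obtain ⟨p, w, hv0, hv1, hv2⟩ := exists_cross_of_dot_eq_zero syz hn hf (v := ![e 1, e 2, e 3])
    (h 0)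
  have h7 : e 7 = 0 := by
    -- `u₀ = f · (b × n)`, so `e 7 * f = 0` forces `e 7 = 0`
    have h4 : e 7 * f 0 = 0 := h 4
    have h5 : e 7 * f 1 = 0 := h 5
    have h6 : e 7 * f 2 = 0 := h 6
    rw [hf] at h4 h5 h6
    have : e 7 * u₀ = 0 := by
      linear_combination (-(e 7 * u₀)) * hn + (b 1 * n 2 - b 2 * n 1) * h4
        + (b 2 * n 0 - b 0 * n 2) * h5 + (b 0 * n 1 - b 1 * n 0) * h6
    exact (mul_eq_zero.1 this).resolve_right hu
  have hc0 : e 4 = c * f 0 := hc 0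
  have hc1 : e 5 = c * f 1 := hc 1
  have hc2 : e 6 = c * f 2 := hc 2
  change e 1 = _ at hv0
  change e 2 = _ at hv1
  change e 3 = _ at hv2
  refine ⟨e 0, p, comb ι x ![0, 0, 0, 0, w 0, w 1, w 2, c], ?_⟩
  rw [hd.map_comb hx hY hι hdf]
  simp only [comb, hc0, hc1, hc2, hv0, hv1, hv2, h7]
  simp [add_mul, mul_add, mul_assoc]
  abel

/-- The classes of the elements of `ι R + ι R z` reduce to powers of `z`: multiplication by
`u₀, u₁` is null-homotopic, and `u₂` acts as `z ^ 2` up to a unit and a combination of `u₀, u₁`. -/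
theorem IsDiff.ι_mem (hx : IsSkew k x) (hd : IsDiff M x d)
    (hY : Algebra.adjoin k (Set.range Y) = ⊤) (hι : ∀ i, ι (Y i) = x i ^ 2)
    (hdf : ∀ i, d (x i) = ι (f i)) {u : Fin 3 → R}
    (hu : Algebra.adjoin k (Set.range u) = ⊤) {m₀ m₁ : Fin 3 → R}
    (h0 : u 0 = m₀ 0 * f 0 + m₀ 1 * f 1 + m₀ 2 * f 2)
    (h1 : u 1 = m₁ 0 * f 0 + m₁ 1 * f 1 + m₁ 2 * f 2)
    {z : A} (hz : d z = 0) {ζ : R} (hζ : z ^ 2 = ι ζ) {c₀ c₁ : R} {α : k}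
    (h2 : u 2 = α • ζ + c₀ * u 0 + c₁ * u 1) (p : R) :
    ι p ∈ Submodule.span k (Set.range (z ^ · : ℕ → A)) ⊔ LinearMap.range d ∧
    ι p * z ∈ Submodule.span k (Set.range (z ^ · : ℕ → A)) ⊔ LinearMap.range d := by
  set N := Submodule.span k (Set.range (z ^ · : ℕ → A)) ⊔ LinearMap.range d with hN
  have hpow : ∀ n, z ^ n ∈ N := fun n =>
    Submodule.mem_sup_left (Submodule.subset_span ⟨n, rfl⟩)
  have hdN : ∀ b, d b ∈ N := fun b => Submodule.mem_sup_right ⟨b, rfl⟩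
  have hmul := fun p b => hd.map_ι_mul hx hY hι hdf p b
  have hb : ∀ i p, ι (p * f i) ∈ N ∧ ι (p * f i) * z ∈ N := fun i p => by
    constructor
    · convert hdN (ι p * x i) using 1
      rw [hmul, hdf, map_mul]
    · convert hdN (ι p * (x i * z)) using 1
      rw [hmul, hd.leibniz_one (mem_gr_one i), hdf, hz, map_mul]
      simp [mul_assoc]
  have hcomb : ∀ v m : R, ∀ m' : Fin 3 → R, v = m' 0 * f 0 + m' 1 * f 1 + m' 2 * f 2 →
      ι (m * v) ∈ N ∧ ι (m * v) * z ∈ N := by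
    rintro v m m' rfl
    rw [mul_add, mul_add, ← mul_assoc, ← mul_assoc, ← mul_assoc, map_add, map_add, add_mul, add_mul]
    exact ⟨N.add_mem (N.add_mem (hb 0 _).1 (hb 1 _).1) (hb 2 _).1,
      N.add_mem (N.add_mem (hb 0 _).2 (hb 1 _).2) (hb 2 _).2⟩
  have hζN : ∀ y ∈ N, ι ζ * y ∈ N := by
    have : N ≤ N.comap (LinearMap.mulLeft k (ι ζ)) := by
      rw [hN, sup_le_iff, Submodule.span_le]
      constructor
      · rintro _ ⟨n, rfl⟩
        change ι ζ * z ^ n ∈ N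
        rw [← hζ, ← pow_add]
        exact hpow _
      · rintro _ ⟨b, rfl⟩
        change ι ζ * d b ∈ N
        rw [← hmul]
        exact hdN _
    exact this
  -- the set of good `p` is a subspace stable under multiplication by the generators of `R`
  let P : Submodule k R := N.comap ι.toLinearMap ⊓
    N.comap (LinearMap.mulRight k z ∘ₗ ι.toLinearMap)
  have hP : ∀ p, p ∈ P ↔ ι p ∈ N ∧ ι p * z ∈ N := fun p => Iff.rfl
  have hone : (1 : R) ∈ P := by
    rw [hP]
    constructor
    · simpa using hpow 0
    · simpa using hpow 1
  have hgen : ∀ i, ∀ p ∈ P, u i * p ∈ P := by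
    have g0 : ∀ p, u 0 * p ∈ P := fun p => by
      rw [mul_comm]; exact hcomb _ p m₀ h0
    have g1 : ∀ p, u 1 * p ∈ P := fun p => by
      rw [mul_comm]; exact hcomb _ p m₁ h1
    have gζ : ∀ p ∈ P, ζ * p ∈ P := fun p hp => by
      rw [hP, map_mul, mul_assoc]
      exact ⟨hζN _ hp.1, hζN _ hp.2⟩
    intro i p hp
    fin_cases i
    · exact g0 p
    · exact g1 p
    · change u 2 * p ∈ P
      rw [h2, add_mul, add_mul, smul_mul_assoc, mul_right_comm c₀, mul_right_comm c₁,
        mul_comm _ (u 0), mul_comm _ (u 1)]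
      exact P.add_mem (P.add_mem (P.smul_mem α (gζ p hp)) (g0 _)) (g1 _)
  have hall : ∀ r p : R, p ∈ P → r * p ∈ P := by
    intro r
    have hr : r ∈ Algebra.adjoin k (Set.range u) := by rw [hu]; trivial
    induction hr using Algebra.adjoin_induction with
    | mem y hy => obtain ⟨i, rfl⟩ := hy; exact hgen i
    | algebraMap c => intro p hp; rw [← Algebra.smul_def]; exact P.smul_mem c hp
    | add v w _ _ hv hw => intro p hp; rw [add_mul]; exact P.add_mem (hv p hp) (hw p hp)
    | mul v w _ _ hv hw => intro p hp; rw [mul_assoc]; exact hv _ (hw p hp)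
  have := hall p 1 hone
  rwa [mul_one] at this

end Cocycles

/-! ### The cohomology of `A` -/

section Assembly

variable {k A : Type} [Field k] [Ring A] [Algebra k A] {x : Fin 3 → A}
  {M : Matrix (Fin 3) (Fin 3) k} {d : A →ₗ[k] A}

/-- The squares `x i ^ 2` generate a central image of a polynomial ring.  Its variables are the
coordinates with respect to a basis `P 0, P 1, P 2` of `k ^ 3`, so that the element `Y i` mapped to
`x i ^ 2` is the linear form `Σ j, P j i * X j`. -/
theorem IsSkew.exists_ι (hx : IsSkew k x) {P : Fin 3 → Fin 3 → k} (hP : LinearIndependent k P)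
    {Y : Fin 3 → MvPolynomial (Fin 3) k}
    (hYdef : ∀ i, Y i = ∑ j, MvPolynomial.C (P j i) * MvPolynomial.X j) :
    Algebra.adjoin k (Set.range Y) = ⊤ ∧
      ∃ ι : MvPolynomial (Fin 3) k →ₐ[k] A, ∀ i, ι (Y i) = x i ^ 2 := by
  have hU : IsUnit (Matrix.of P) := Matrix.linearIndependent_rows_iff_isUnit.1 hP
  obtain ⟨Q, hPQ, hQP⟩ := isUnit_iff_exists.1 hU
  constructor
  · rw [eq_top_iff, ← MvPolynomial.adjoin_range_X, Algebra.adjoin_le_iff]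
    rintro _ ⟨j, rfl⟩
    have : (MvPolynomial.X j : MvPolynomial (Fin 3) k) = ∑ i, Q i j • Y i := by
      simp_rw [hYdef, Finset.smul_sum, MvPolynomial.smul_eq_C_mul, ← mul_assoc]
      rw [Finset.sum_comm]
      simp_rw [← Finset.sum_mul, ← map_mul, ← map_sum]
      have h : ∀ l, ∑ i, Q i j * P l i = (1 : Matrix (Fin 3) (Fin 3) k) l j := fun l => by
        rw [← hPQ, Matrix.mul_apply]
        exact Finset.sum_congr rfl fun i _ => mul_comm _ _
      simp_rw [h, Matrix.one_apply]
      simp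
    rw [this]
    exact Subalgebra.sum_mem _ fun i _ =>
      Subalgebra.smul_mem _ (Algebra.subset_adjoin (Set.mem_range_self i)) _
  · let c : Fin 3 → Subalgebra.center k A := fun i =>
      ⟨x i ^ 2, Subalgebra.mem_center_iff.2 fun a => (hx.sq_comm i a).symm⟩
    refine ⟨(Subalgebra.center k A).val.comp (MvPolynomial.aeval fun j => ∑ i, Q i j • c i), ?_⟩
    intro i
    have : MvPolynomial.aeval (fun j => ∑ i, Q i j • c i) (Y i) = c i := by
      rw [hYdef, map_sum]
      simp_rw [map_mul, MvPolynomial.aeval_X, MvPolynomial.aeval_C, ← Algebra.smul_def,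
        Finset.smul_sum, smul_smul]
      rw [Finset.sum_comm]
      simp_rw [← Finset.sum_smul]
      have h : ∀ l, ∑ j, P j i * Q l j = (1 : Matrix (Fin 3) (Fin 3) k) l i := fun l => by
        rw [← hQP, Matrix.mul_apply]
        exact Finset.sum_congr rfl fun i _ => mul_comm _ _
      simp_rw [h, Matrix.one_apply]
      simp
    rw [AlgHom.comp_apply, this]
    rfl

/-- The first two variables form a regular sequence: their syzygies are the trivial ones. -/
theorem syzygy_X (p q : MvPolynomial (Fin 3) k)
    (h : MvPolynomial.X 0 * p + MvPolynomial.X 1 * q = 0) :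
    ∃ c, p = MvPolynomial.X 1 * c ∧ q = -(MvPolynomial.X 0 * c) := by
  have h1 : (MvPolynomial.X 0 : MvPolynomial (Fin 3) k) ∣ MvPolynomial.X 1 * q :=
    ⟨-p, by linear_combination h⟩
  rcases (MvPolynomial.X_prime (R := k) (i := (0 : Fin 3))).dvd_or_dvd h1 with h2 | ⟨c, rfl⟩
  · rw [MvPolynomial.X_dvd_X] at h2
    simp at h2
  · refine ⟨-c, ?_, by ring⟩
    apply mul_left_cancel₀ (MvPolynomial.X_ne_zero (R := k) (0 : Fin 3))
    linear_combination h

theorem IsDiff.map_z (hd : IsDiff M x d) {t : Fin 3 → k} (ht : M.transpose.mulVec t = 0) :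
    d (t 0 • x 0 + t 1 • x 1 + t 2 • x 2) = 0 := by
  have h := fun j => congrFun ht j
  simp only [Matrix.mulVec, dotProduct, Fin.sum_univ_three, Matrix.transpose_apply,
    Pi.zero_apply] at h
  simp only [map_add, map_smul, hd.dX]
  trans (M 0 0 * t 0 + M 1 0 * t 1 + M 2 0 * t 2) • x 0 ^ 2
    + (M 0 1 * t 0 + M 1 1 * t 1 + M 2 1 * t 2) • x 1 ^ 2
    + (M 0 2 * t 0 + M 1 2 * t 1 + M 2 2 * t 2) • x 2 ^ 2
  · module
  · rw [h, h, h]; simp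

/-- Every cocycle is, up to a coboundary, a linear combination of powers of `z`. -/
theorem IsDiff.ker_le (hx : IsSkew k x) (hd : IsDiff M x d) (hrank : M.rank = 2)
    {s t : Fin 3 → k} (hs0 : s ≠ 0) (ht0 : t ≠ 0)
    (hs : M.mulVec s = 0) (ht : M.transpose.mulVec t = 0)
    (hst : s 0 * (t 0) ^ 2 + s 1 * (t 1) ^ 2 + s 2 * (t 2) ^ 2 ≠ 0)
    {z : A} (hz : z = t 0 • x 0 + t 1 • x 1 + t 2 • x 2) {y : A} (hy : d y = 0) :
    y ∈ Submodule.span k (Set.range (z ^ · : ℕ → A)) ⊔ LinearMap.range d := by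
  obtain ⟨a, b, hli, hab⟩ := exists_frame M hrank s t hs0 ht0 hs ht
  let C : k →+* MvPolynomial (Fin 3) k := MvPolynomial.C
  have hC1 : C 1 = 1 := MvPolynomial.C_1
  let u : Fin 3 → MvPolynomial (Fin 3) k := MvPolynomial.X
  let Y : Fin 3 → MvPolynomial (Fin 3) k := fun i => C (a i) * u 0 + C (b i) * u 1 + C (s i) * u 2
  obtain ⟨hY, ι, hι⟩ := hx.exists_ι hli (Y := Y) (fun i => by
    simp [Y, u, C, Fin.sum_univ_three])
  have hιC : ∀ c, ι (C c) = algebraMap k A c := fun c => ι.commutes c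
  let f : Fin 3 → MvPolynomial (Fin 3) k := fun i =>
    u 0 * C (M.mulVec a i) + u 1 * C (M.mulVec b i)
  have hdf : ∀ i, d (x i) = ι (f i) := by
    intro i
    have h : f i = C (M i 0) * Y 0 + C (M i 1) * Y 1 + C (M i 2) * Y 2 := by
      have h0 : C (M.mulVec s i) = 0 := by rw [hs]; simp
      simp only [f, Y, Matrix.mulVec, dotProduct, Fin.sum_univ_three, map_add, map_mul] at h0 ⊢
      linear_combination (-u 2) * h0
    rw [h, hd.dX]
    simp only [map_add, map_mul ι, hι, hιC, ← Algebra.smul_def]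
  obtain ⟨i, hi⟩ := Function.ne_iff.1 ht0
  let n : Fin 3 → k := Pi.single i (t i)⁻¹
  have hnt : n 0 * t 0 + n 1 * t 1 + n 2 * t 2 = 1 := by
    have : n ⬝ᵥ t = 1 := by simpa [n] using inv_mul_cancel₀ hi
    simpa [dotProduct, Fin.sum_univ_three] using this
  have hnt' : C (n 0) * C (t 0) + C (n 1) * C (t 1) + C (n 2) * C (t 2) = 1 := by
    simp only [← map_mul, ← map_add, hnt]; exact hC1
  set v := M.mulVec a with hv
  set w := M.mulVec b with hw
  have hab0 : C (v 1) * C (w 2) - C (v 2) * C (w 1) = C (t 0) := by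
    rw [← hab, cross_apply]; simp
  have hab1 : C (v 2) * C (w 0) - C (v 0) * C (w 2) = C (t 1) := by
    rw [← hab, cross_apply]; simp
  have hab2 : C (v 0) * C (w 1) - C (v 1) * C (w 0) = C (t 2) := by
    rw [← hab, cross_apply]; simp
  have hn : C (n 0) * (C (v 1) * C (w 2) - C (v 2) * C (w 1))
      + C (n 1) * (C (v 2) * C (w 0) - C (v 0) * C (w 2))
      + C (n 2) * (C (v 0) * C (w 1) - C (v 1) * C (w 0)) = 1 := by
    rw [hab0, hab1, hab2, hnt']
  obtain ⟨p₀, p₁, y', rfl⟩ := hd.exists_normal_form hx hY hι hdf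
    (MvPolynomial.X_ne_zero (R := k) (0 : Fin 3)) syzygy_X (a := fun i => C (v i))
    (b := fun i => C (w i)) (n := fun i => C (n i)) hn (fun i => rfl) hy
  have hz' : ι (C (t 0)) * x 0 + ι (C (t 1)) * x 1 + ι (C (t 2)) * x 2 = z := by
    rw [hz, hιC, hιC, hιC]
    simp only [← Algebra.smul_def]
  simp only [hab0, hab1, hab2, hz']
  have key := hd.ι_mem hx hY hι hdf (u := u) MvPolynomial.adjoin_range_X
    -- `u 0 = f · (w × n)` and `u 1 = f · (n × v)`
    (m₀ := ![C (w 1) * C (n 2) - C (w 2) * C (n 1), C (w 2) * C (n 0) - C (w 0) * C (n 2),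
      C (w 0) * C (n 1) - C (w 1) * C (n 0)])
    (m₁ := ![C (n 1) * C (v 2) - C (n 2) * C (v 1), C (n 2) * C (v 0) - C (n 0) * C (v 2),
      C (n 0) * C (v 1) - C (n 1) * C (v 0)])
    (by
      simp only [f, Matrix.cons_val]
      linear_combination (-u 0) * hn)
    (by
      simp only [f, Matrix.cons_val]
      linear_combination (-u 1) * hn)
    (z := z) (by rw [hz, hd.map_z ht])
    (ζ := C (t 0 ^ 2) * Y 0 + C (t 1 ^ 2) * Y 1 + C (t 2 ^ 2) * Y 2) (by
      rw [hz, sq_of_anticomm hx.anticomm]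
      simp only [map_add, map_mul ι, hι, hιC, ← Algebra.smul_def])
    (c₀ := -C ((s 0 * (t 0) ^ 2 + s 1 * (t 1) ^ 2 + s 2 * (t 2) ^ 2)⁻¹ *
      (a 0 * (t 0) ^ 2 + a 1 * (t 1) ^ 2 + a 2 * (t 2) ^ 2)))
    (c₁ := -C ((s 0 * (t 0) ^ 2 + s 1 * (t 1) ^ 2 + s 2 * (t 2) ^ 2)⁻¹ *
      (b 0 * (t 0) ^ 2 + b 1 * (t 1) ^ 2 + b 2 * (t 2) ^ 2)))
    (α := (s 0 * (t 0) ^ 2 + s 1 * (t 1) ^ 2 + s 2 * (t 2) ^ 2)⁻¹) (by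
      have h := congrArg C (inv_mul_cancel₀ hst)
      rw [MvPolynomial.smul_eq_C_mul]
      change u 2 = C _ * _ + _ + _
      simp only [map_mul, map_add, map_pow, hC1, Y] at h ⊢
      linear_combination (-u 2) * h)
  exact Submodule.add_mem _ (Submodule.add_mem _ (key p₀).1 (key p₁).2)
    (Submodule.mem_sup_right ⟨y', rfl⟩)

theorem pow_mem_gr {a : A} (ha : a ∈ gr k x 1) (n : ℕ) : a ^ n ∈ gr k x n := by
  rw [gr, pow_one] at ha
  exact Submodule.pow_mem_pow _ ha n

/-- The homogeneous version of `IsDiff.ker_le`. -/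
theorem IsDiff.ker_inf_gr (hx : IsSkew k x) (hd : IsDiff M x d) (hrank : M.rank = 2)
    {s t : Fin 3 → k} (hs0 : s ≠ 0) (ht0 : t ≠ 0)
    (hs : M.mulVec s = 0) (ht : M.transpose.mulVec t = 0)
    (hst : s 0 * (t 0) ^ 2 + s 1 * (t 1) ^ 2 + s 2 * (t 2) ^ 2 ≠ 0)
    {z : A} (hz : z = t 0 • x 0 + t 1 • x 1 + t 2 • x 2) (n : ℕ) :
    LinearMap.ker d ⊓ gr k x (n + 1) = Submodule.span k {z ^ (n + 1)} ⊔ (gr k x n).map d := by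
  have hz1 : z ∈ gr k x 1 := by
    rw [hz]
    exact add_mem (add_mem (Submodule.smul_mem _ _ (mem_gr_one 0))
      (Submodule.smul_mem _ _ (mem_gr_one 1))) (Submodule.smul_mem _ _ (mem_gr_one 2))
  have hdz : d z = 0 := by rw [hz, hd.map_z ht]
  apply le_antisymm
  · rintro y ⟨hy, hyn⟩
    obtain ⟨π, hπ⟩ := hx.exists_proj
    have hle : Submodule.span k (Set.range (z ^ · : ℕ → A)) ⊔ LinearMap.range d ≤
        (Submodule.span k {z ^ (n + 1)} ⊔ (gr k x n).map d).comap (π (n + 1)) := by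
      rw [sup_le_iff, Submodule.span_le]
      constructor
      · rintro _ ⟨m, rfl⟩
        rw [SetLike.mem_coe, Submodule.mem_comap, hπ m _ _ (pow_mem_gr hz1 m)]
        split_ifs with h
        · rw [h]; exact Submodule.mem_sup_left (Submodule.mem_span_singleton_self _)
        · exact Submodule.zero_mem _
      · rintro _ ⟨b, rfl⟩
        have hb : b ∈ ⨆ m, gr k x m := by rw [hx.iSup_gr]; trivial
        induction hb using Submodule.iSup_induction' with
        | mem m b hb =>
          rw [Submodule.mem_comap, hπ _ _ _ (hd.grade m b hb)]
          split_ifs with h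
          · obtain rfl : m = n := by omega
            exact Submodule.mem_sup_right ⟨b, hb, rfl⟩
          · exact Submodule.zero_mem _
        | zero => simp
        | add b c _ _ hb hc => rw [map_add]; exact Submodule.add_mem _ hb hc
    have := hle (hd.ker_le hx hrank hs0 ht0 hs ht hst hz hy)
    rwa [Submodule.mem_comap, hπ _ _ _ hyn, if_pos rfl] at this
  · rw [sup_le_iff, Submodule.span_singleton_le_iff_mem]
    refine ⟨⟨?_, pow_mem_gr hz1 _⟩, ?_⟩
    · change d (z ^ (n + 1)) = 0
      induction n with
      | zero => simpa using hdz
      | succ n ih => rw [pow_succ', hd.leibniz_one hz1, ih, hdz]; simp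
    · rintro _ ⟨b, hb, rfl⟩
      exact ⟨hd.dd b, hd.grade n b hb⟩

end Assembly

/-- `SkewAlg k` with the differential `D` is an instance of the setting above. -/
theorem DGDiff.isDiff {k : Type} [Field k] {M : Matrix (Fin 3) (Fin 3) k} (D : DGDiff k M) :
    (∀ n, deg k n = gr k (X k) n) ∧ IsDiff M (X k) D.d := by
  have hdeg : ∀ n, deg k n = gr k (X k) n := fun n => by
    have : ({X k 0, X k 1, X k 2} : Set (SkewAlg k)) = Set.range (X k) := by
      ext y
      simp [Fin.exists_fin_succ, eq_comm]
    rw [deg, gr, this]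
  refine ⟨hdeg, ?_, D.dd, ?_, D.dX⟩
  · intro n
    rw [← hdeg, ← hdeg]
    exact D.grade n
  · intro n
    rw [← hdeg]
    exact D.leibniz n

/-- Assume `rank M = 2`, let `s, t` be nonzero vectors spanning the null
spaces of `M` and `Mᵀ`, set `z = t₁x₁ + t₂x₂ + t₃x₃`, and suppose
`s₁t₁² + s₂t₂² + s₃t₃² ≠ 0`.  Then for every `n ≥ 1`, `Zⁿ = k·zⁿ + Bⁿ` and `zⁿ ∉ Bⁿ`;
in other words the cohomology of `(A, ∂)` is the polynomial algebra `k[⌈z⌉]` on the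
degree-one class `⌈z⌉`. -/
theorem stmt12 (k : Type) [Field k] [IsAlgClosed k] [CharZero k]
    (M : Matrix (Fin 3) (Fin 3) k) (D : DGDiff k M) (hrank : M.rank = 2)
    (s t : Fin 3 → k) (hs0 : s ≠ 0) (ht0 : t ≠ 0)
    (hs : M.mulVec s = 0) (ht : M.transpose.mulVec t = 0)
    (hst : s 0 * (t 0) ^ 2 + s 1 * (t 1) ^ 2 + s 2 * (t 2) ^ 2 ≠ 0)
    (z : SkewAlg k) (hz : z = t 0 • X k 0 + t 1 • X k 1 + t 2 • X k 2) :
    ∀ n : ℕ, 1 ≤ n →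
      cocycle k D n = Submodule.span k {z ^ n} ⊔ cobound k D n ∧
        z ^ n ∉ cobound k D n := by
  intro n hn
  obtain ⟨m, rfl⟩ : ∃ m, n = m + 1 := ⟨n - 1, by omega⟩
  obtain ⟨hdeg, hd⟩ := D.isDiff
  constructor
  · rw [cocycle, cobound, hdeg, hdeg]
    exact hd.ker_inf_gr (isSkew_X k) hrank hs0 ht0 hs ht hst hz m
  · rintro ⟨a, -, ha⟩
    exact hd.pow_ne (isSkew_X k) hs hst hz (m + 1) a ha
end
end

section
/- Assume M has the rank-one form. Then: (1) Z¹ is the two-dimensional span of l₁x₁−x₂ and l₂x₁−x₃, i.e. Z¹ = k(l₁x₁−x₂) ⊕ k(l₂x₁−x₃); (2) Z² is the four-dimensional span of x₁², x₂², x₃² and l₂x₁x₂ − l₁x₁x₃ + x₂x₃; (3) B² is the one-dimensional span of m₁₁x₁² + m₁₂x₂² + m₁₃x₃². -/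
/-!
Write `u = m₁₁x₁² + m₁₂x₂² + m₁₃x₃²` and `(c₀, c₁, c₂) = (1, l₁, l₂)`. The rank-one form says
`∂xᵢ = cᵢ u`, and `u` is central because the squares of the generators are. The Leibniz rule then
gives `∂(xᵢxⱼ) = u (cᵢxⱼ - cⱼxᵢ)`, which vanishes for `i = j`. The three assertions are therefore
linear algebra once two facts are known: the monomials `xᵢxⱼ` with `i ≤ j` are linearly independent
(`quad_indep`), and multiplication by `u` is injective on `A¹` (`mul_lin_eq_zero`).

Both facts come from a family of representations `rep t₁ t₂ t₃` of `A` on `k²`, which sends `xᵢ` to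
`tᵢ eᵢ` for three pairwise anticommuting matrices `eᵢ` with `e₁² = e₂² = 1` and `e₃² = -1`. The
central element `u` acts through the scalar `m₁₁t₁² + m₁₂t₂² - m₁₃t₃²`, and evaluating at the vectors
`t` with entries in `{0, 1}` isolates every coefficient.
-/

noncomputable section

/-! ### Commutation relations and a family of representations -/

theorem X_one_zero (k : Type) [Field k] : X k 1 * X k 0 = -(X k 0 * X k 1) := by
  have h := RingQuot.mkAlgHom_rel k (SkewRel.r01 (k := k))
  simp only [map_add, map_mul, map_zero] at h
  exact eq_neg_of_add_eq_zero_right h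

theorem X_two_one (k : Type) [Field k] : X k 2 * X k 1 = -(X k 1 * X k 2) := by
  have h := RingQuot.mkAlgHom_rel k (SkewRel.r12 (k := k))
  simp only [map_add, map_mul, map_zero] at h
  exact eq_neg_of_add_eq_zero_right h

theorem X_two_zero (k : Type) [Field k] : X k 2 * X k 0 = -(X k 0 * X k 2) := by
  have h := RingQuot.mkAlgHom_rel k (SkewRel.r20 (k := k))
  simp only [map_add, map_mul, map_zero] at h
  exact eq_neg_of_add_eq_zero_left h

/-- The image of `xᵢ` under `rep t₁ t₂ t₃`. -/
def repGen {k : Type} [Field k] (t1 t2 t3 : k) : Fin 3 → Matrix (Fin 2) (Fin 2) k :=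
  ![!![t1, 0; 0, -t1], !![0, t2; t2, 0], !![0, t3; -t3, 0]]

/-- The two-dimensional representation of `A` sending `x₁, x₂, x₃` to `t₁e₁, t₂e₂, t₃e₃`, where
`e₁ = diag(1, -1)`, `e₂` swaps the two basis vectors and `e₃ = e₁e₂`. -/
def rep {k : Type} [Field k] (t1 t2 t3 : k) : SkewAlg k →ₐ[k] Matrix (Fin 2) (Fin 2) k :=
  RingQuot.liftAlgHom k ⟨FreeAlgebra.lift k (repGen t1 t2 t3), by
    intro a b h
    cases h <;> ext i j <;> fin_cases i <;> fin_cases j <;>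
      simp [repGen] <;> ring⟩

theorem rep_X {k : Type} [Field k] (t1 t2 t3 : k) (i : Fin 3) :
    rep t1 t2 t3 (X k i) = repGen t1 t2 t3 i := by
  simp [rep, X]

/-- The quadratic element with the given coefficients in the monomials `xᵢxⱼ`, `i ≤ j`. -/
def quad {k : Type} [Field k] (a b c p q r : k) : SkewAlg k :=
  a • (X k 0) ^ 2 + b • (X k 1) ^ 2 + c • (X k 2) ^ 2 +
    (p • (X k 0 * X k 1) + q • (X k 0 * X k 2) + r • (X k 1 * X k 2))

/-- The linear form `a x₁ + b x₂ + c x₃` in `A¹`. -/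
def lin {k : Type} [Field k] (a b c : k) : SkewAlg k :=
  a • X k 0 + b • X k 1 + c • X k 2

theorem rep_lin {k : Type} [Field k] (t1 t2 t3 a b c : k) :
    rep t1 t2 t3 (lin a b c) =
      !![a * t1, b * t2 + c * t3; b * t2 - c * t3, -(a * t1)] := by
  simp only [lin, map_add, map_smul, rep_X]
  ext i j
  fin_cases i <;> fin_cases j <;> simp [repGen]
  ring

theorem rep_quad {k : Type} [Field k] (t1 t2 t3 a b c p q r : k) :
    rep t1 t2 t3 (quad a b c p q r) =
      !![a * t1 ^ 2 + b * t2 ^ 2 - c * t3 ^ 2 - r * t2 * t3, p * t1 * t2 + q * t1 * t3;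
        -(p * t1 * t2) + q * t1 * t3, a * t1 ^ 2 + b * t2 ^ 2 - c * t3 ^ 2 + r * t2 * t3] := by
  simp only [quad, map_add, map_smul, map_mul, map_pow, rep_X]
  ext i j
  fin_cases i <;> fin_cases j <;>
    simp [repGen, pow_two] <;> ring

/-! ### Linear independence and injectivity of multiplication by `u` -/

theorem quad_indep {k : Type} [Field k] {a b c p q r : k} (h : quad a b c p q r = 0) :
    a = 0 ∧ b = 0 ∧ c = 0 ∧ p = 0 ∧ q = 0 ∧ r = 0 := by
  have key (t1 t2 t3 : k) (i j : Fin 2) : rep t1 t2 t3 (quad a b c p q r) i j = 0 := by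
    rw [h, map_zero]; rfl
  simp only [rep_quad] at key
  have ha : a = 0 := by simpa using key 1 0 0 0 0
  have hb : b = 0 := by simpa using key 0 1 0 0 0
  have hc : c = 0 := by simpa using key 0 0 1 0 0
  refine ⟨ha, hb, hc, ?_, ?_, ?_⟩
  · simpa using key 1 1 0 0 1
  · simpa using key 1 0 1 0 1
  · simpa [ha, hb, hc] using key 0 1 1 0 0

theorem lin_indep {k : Type} [Field k] {a b c : k} (h : lin a b c = 0) :
    a = 0 ∧ b = 0 ∧ c = 0 := by
  have key (t1 t2 t3 : k) (i j : Fin 2) : rep t1 t2 t3 (lin a b c) i j = 0 := by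
    rw [h, map_zero]; rfl
  simp only [rep_lin] at key
  exact ⟨by simpa using key 1 0 0 0 0, by simpa using key 0 1 0 0 1, by simpa using key 0 0 1 0 1⟩

/-- A nonzero combination of the squares `xᵢ²` does not annihilate any nonzero linear form. -/
theorem mul_lin_eq_zero {k : Type} [Field k] {m1 m2 m3 a b c : k}
    (hm : ¬(m1 = 0 ∧ m2 = 0 ∧ m3 = 0)) (h : quad m1 m2 m3 0 0 0 * lin a b c = 0) :
    a = 0 ∧ b = 0 ∧ c = 0 := by
  have key (t1 t2 t3 : k) (i j : Fin 2) :
      rep t1 t2 t3 (quad m1 m2 m3 0 0 0 * lin a b c) i j = 0 := by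
    rw [h, map_zero]; rfl
  simp only [map_mul, rep_lin, rep_quad] at key
  refine ⟨?_, ?_, ?_⟩ <;> by_contra hne <;> apply hm
  · have h1 : m1 = 0 := by simpa [hne] using key 1 0 0 0 0
    have h2 : m2 = 0 := by simpa [hne, h1] using key 1 1 0 0 0
    have h3 : m3 = 0 := by simpa [hne, h1] using key 1 0 1 0 0
    exact ⟨h1, h2, h3⟩
  · have h2 : m2 = 0 := by simpa [hne] using key 0 1 0 0 1
    have h1 : m1 = 0 := by simpa [hne, h2] using key 1 1 0 0 1
    -- If `m₃ ≠ 0`, then evaluating at `(0, 0, 1)` forces `c = 0`.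
    have h3 : m3 = 0 := by
      by_contra h3
      have hc : c = 0 := by simpa [h3] using key 0 0 1 0 1
      exact h3 (by simpa [hne, h2, hc] using key 0 1 1 0 1)
    exact ⟨h1, h2, h3⟩
  · have h3 : m3 = 0 := by simpa [hne] using key 0 0 1 0 1
    have h1 : m1 = 0 := by simpa [hne, h3] using key 1 0 1 0 1
    have h2 : m2 = 0 := by
      by_contra h2
      have hb : b = 0 := by simpa [h2] using key 0 1 0 0 1
      exact h2 (by simpa [hne, h3, hb] using key 0 1 1 0 1)
    exact ⟨h1, h2, h3⟩

/-! ### The components of degree one and two -/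

theorem mem_deg_one {k : Type} [Field k] {x : SkewAlg k} :
    x ∈ deg k 1 ↔ ∃ a b c : k, lin a b c = x := by
  rw [deg, pow_one, Submodule.mem_span_triple]
  rfl

theorem X_mem_deg_one {k : Type} [Field k] (i : Fin 3) : X k i ∈ deg k 1 := by
  rw [deg, pow_one]
  apply Submodule.subset_span
  fin_cases i <;> simp

theorem lin_mul_lin {k : Type} [Field k] (a b c a' b' c' : k) :
    lin a b c * lin a' b' c' = quad (a * a') (b * b') (c * c')
      (a * b' - b * a') (a * c' - c * a') (b * c' - c * b') := by
  simp only [lin, quad, mul_add, add_mul, smul_mul_smul_comm, X_one_zero, X_two_zero, X_two_one,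
    pow_two]
  module

theorem X_mul_X_mem_deg_two {k : Type} [Field k] (i j : Fin 3) : X k i * X k j ∈ deg k 2 := by
  rw [deg, pow_two, ← pow_one (Submodule.span k _)]
  exact Submodule.mul_mem_mul (X_mem_deg_one i) (X_mem_deg_one j)

theorem mem_deg_two {k : Type} [Field k] {x : SkewAlg k} :
    x ∈ deg k 2 ↔ ∃ a b c p q r : k, quad a b c p q r = x := by
  constructor
  · intro h
    rw [deg, pow_two, ← pow_one (Submodule.span k _)] at h
    refine Submodule.mul_induction_on h ?_ ?_
    · intro y hy z hz
      obtain ⟨a, b, c, rfl⟩ := mem_deg_one.1 hy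
      obtain ⟨a', b', c', rfl⟩ := mem_deg_one.1 hz
      exact ⟨_, _, _, _, _, _, (lin_mul_lin a b c a' b' c').symm⟩
    · rintro _ _ ⟨a, b, c, p, q, r, rfl⟩ ⟨a', b', c', p', q', r', rfl⟩
      refine ⟨a + a', b + b', c + c', p + p', q + q', r + r', ?_⟩
      simp only [quad]
      module
  · rintro ⟨a, b, c, p, q, r, rfl⟩
    have h := X_mul_X_mem_deg_two (k := k)
    simp only [quad, pow_two]
    exact add_mem (add_mem (add_mem (Submodule.smul_mem _ _ (h 0 0))
      (Submodule.smul_mem _ _ (h 1 1))) (Submodule.smul_mem _ _ (h 2 2)))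
      (add_mem (add_mem (Submodule.smul_mem _ _ (h 0 1)) (Submodule.smul_mem _ _ (h 0 2)))
        (Submodule.smul_mem _ _ (h 1 2)))

/-! ### The differential in degrees one and two -/

theorem mul_sq_of_anticommute {R : Type} [Ring R] {a b : R} (h : a * b = -(b * a)) :
    a * b ^ 2 = b ^ 2 * a := by
  rw [pow_two, ← mul_assoc, h, neg_mul, mul_assoc, h, mul_neg, neg_neg, mul_assoc]

/-- Squares of generators, hence their combinations, commute with every generator: for `i ≠ j`,
moving `xⱼ` past `xᵢ²` changes the sign twice. -/
theorem X_mul_quad {k : Type} [Field k] (m1 m2 m3 : k) (i : Fin 3) :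
    X k i * quad m1 m2 m3 0 0 0 = quad m1 m2 m3 0 0 0 * X k i := by
  have key (i j : Fin 3) : X k i * X k j ^ 2 = X k j ^ 2 * X k i := by
    have anti : X k i * X k j = X k j * X k i ∨ X k i * X k j = -(X k j * X k i) := by
      fin_cases i <;> fin_cases j <;> simp [X_one_zero, X_two_zero, X_two_one]
    rcases anti with h | h
    · exact (show Commute _ _ from h).pow_right 2
    · exact mul_sq_of_anticommute h
  simp only [quad, zero_smul, add_zero, mul_add, add_mul, mul_smul_comm, smul_mul_assoc, key]

theorem d_X_mul_X {k : Type} [Field k] {M : Matrix (Fin 3) (Fin 3) k} (D : DGDiff k M)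
    {m1 m2 m3 : k} {c : Fin 3 → k} (hd : ∀ i, D.d (X k i) = c i • quad m1 m2 m3 0 0 0)
    (i j : Fin 3) :
    D.d (X k i * X k j) = quad m1 m2 m3 0 0 0 * (c i • X k j - c j • X k i) := by
  rw [D.leibniz 1 _ (X_mem_deg_one i), hd, hd, pow_one, mul_smul_comm, X_mul_quad, mul_sub,
    mul_smul_comm, mul_smul_comm, smul_mul_assoc]
  module

theorem d_lin {k : Type} [Field k] {M : Matrix (Fin 3) (Fin 3) k} (D : DGDiff k M)
    {m1 m2 m3 l1 l2 : k} (hd : ∀ i, D.d (X k i) = ![1, l1, l2] i • quad m1 m2 m3 0 0 0)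
    (a b c : k) :
    D.d (lin a b c) = (a + l1 * b + l2 * c) • quad m1 m2 m3 0 0 0 := by
  simp only [lin, map_add, map_smul, hd]
  simp only [Matrix.cons_val]
  module

theorem d_quad {k : Type} [Field k] {M : Matrix (Fin 3) (Fin 3) k} (D : DGDiff k M)
    {m1 m2 m3 l1 l2 : k} (hd : ∀ i, D.d (X k i) = ![1, l1, l2] i • quad m1 m2 m3 0 0 0)
    (a b c p q r : k) :
    D.d (quad a b c p q r) =
      quad m1 m2 m3 0 0 0 * lin (-(l1 * p) - l2 * q) (p - l2 * r) (q + l1 * r) := by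
  have e : D.d (quad a b c p q r) =
      a • D.d (X k 0 * X k 0) + b • D.d (X k 1 * X k 1) + c • D.d (X k 2 * X k 2) +
        (p • D.d (X k 0 * X k 1) + q • D.d (X k 0 * X k 2) + r • D.d (X k 1 * X k 2)) := by
    simp only [quad, map_add, map_smul, pow_two]
  rw [e]
  simp only [d_X_mul_X D hd, ← mul_smul_comm, ← mul_add]
  congr 1
  simp only [lin, Matrix.cons_val]
  module

/-! ### Cocycles and coboundaries -/

/-- Assume `M` has the rank-one form, with rows `(m₁₁,m₁₂,m₁₃)`,
`l₁·(m₁₁,m₁₂,m₁₃)`, `l₂·(m₁₁,m₁₂,m₁₃)` and `(m₁₁,m₁₂,m₁₃) ≠ (0,0,0)`.  Then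
`Z¹` is the two-dimensional span of `l₁x₁ − x₂` and `l₂x₁ − x₃`, `Z²` is the
four-dimensional span of `x₁², x₂², x₃²` and `l₂x₁x₂ − l₁x₁x₃ + x₂x₃`, and `B²` is the
one-dimensional span of `m₁₁x₁² + m₁₂x₂² + m₁₃x₃²`. -/
theorem stmt14 (k : Type) [Field k] [IsAlgClosed k] [CharZero k]
    (m11 m12 m13 l1 l2 : k) (hm : ¬(m11 = 0 ∧ m12 = 0 ∧ m13 = 0))
    (M : Matrix (Fin 3) (Fin 3) k)
    (hM : M = !![m11, m12, m13; l1 * m11, l1 * m12, l1 * m13; l2 * m11, l2 * m12, l2 * m13])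
    (D : DGDiff k M) :
    (cocycle k D 1 = Submodule.span k {l1 • X k 0 - X k 1, l2 • X k 0 - X k 2} ∧
      Module.finrank k (cocycle k D 1) = 2) ∧
    (cocycle k D 2 = Submodule.span k
        {(X k 0) ^ 2, (X k 1) ^ 2, (X k 2) ^ 2,
          l2 • (X k 0 * X k 1) - l1 • (X k 0 * X k 2) + X k 1 * X k 2} ∧
      Module.finrank k (cocycle k D 2) = 4) ∧
    (cobound k D 2 = Submodule.span k
        {m11 • (X k 0) ^ 2 + m12 • (X k 1) ^ 2 + m13 • (X k 2) ^ 2} ∧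
      Module.finrank k (cobound k D 2) = 1) := by
  have hd (i) : D.d (X k i) = ![1, l1, l2] i • quad m11 m12 m13 0 0 0 := by
    rw [D.dX, hM]
    fin_cases i <;> simp [quad, smul_smul]
  have hu : m11 • (X k 0) ^ 2 + m12 • (X k 1) ^ 2 + m13 • (X k 2) ^ 2 =
      quad m11 m12 m13 0 0 0 := by simp [quad]
  have hu0 : quad m11 m12 m13 0 0 0 ≠ 0 := fun h => by
    obtain ⟨h1, h2, h3, -⟩ := quad_indep h
    exact hm ⟨h1, h2, h3⟩
  have hZ1 : cocycle k D 1 = Submodule.span k {l1 • X k 0 - X k 1, l2 • X k 0 - X k 2} := by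
    ext x
    rw [cocycle, Submodule.mem_inf, LinearMap.mem_ker, mem_deg_one, Submodule.mem_span_pair]
    constructor
    · rintro ⟨hx, a, b, c, rfl⟩
      rw [d_lin D hd, smul_eq_zero, or_iff_left hu0] at hx
      obtain rfl : a = -(l1 * b) - l2 * c := by linear_combination hx
      exact ⟨-b, -c, by simp only [lin]; module⟩
    · rintro ⟨b, c, rfl⟩
      have e : b • (l1 • X k 0 - X k 1) + c • (l2 • X k 0 - X k 2) =
          lin (l1 * b + l2 * c) (-b) (-c) := by simp only [lin]; module
      refine ⟨?_, _, _, _, e.symm⟩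
      rw [e, d_lin D hd, smul_eq_zero]
      left
      ring
  have hZ2 : cocycle k D 2 = Submodule.span k
      {(X k 0) ^ 2, (X k 1) ^ 2, (X k 2) ^ 2,
        l2 • (X k 0 * X k 1) - l1 • (X k 0 * X k 2) + X k 1 * X k 2} := by
    ext x
    rw [cocycle, Submodule.mem_inf, LinearMap.mem_ker, mem_deg_two]
    simp only [Submodule.mem_span_insert, Submodule.mem_span_singleton]
    constructor
    · rintro ⟨hx, a, b, c, p, q, r, rfl⟩
      rw [d_quad D hd] at hx
      -- The first coefficient of the linear form vanishes as soon as the other two do.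
      obtain ⟨-, hp, hq⟩ := mul_lin_eq_zero hm hx
      obtain rfl : p = l2 * r := by linear_combination hp
      obtain rfl : q = -(l1 * r) := by linear_combination hq
      exact ⟨a, _, ⟨b, _, ⟨c, _, ⟨r, rfl⟩, rfl⟩, rfl⟩, by simp only [quad]; module⟩
    · rintro ⟨a, _, ⟨b, _, ⟨c, _, ⟨r, rfl⟩, rfl⟩, rfl⟩, rfl⟩
      have e : a • X k 0 ^ 2 + (b • X k 1 ^ 2 + (c • X k 2 ^ 2 +
          r • (l2 • (X k 0 * X k 1) - l1 • (X k 0 * X k 2) + X k 1 * X k 2))) =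
          quad a b c (l2 * r) (-(l1 * r)) r := by simp only [quad]; module
      refine ⟨?_, _, _, _, _, _, _, e.symm⟩
      have e0 : -(l1 * (l2 * r)) - l2 * -(l1 * r) = 0 := by ring
      rw [e, d_quad D hd, e0, sub_self, neg_add_cancel]
      simp [lin]
  have hB2 : cobound k D 2 = Submodule.span k
      {m11 • (X k 0) ^ 2 + m12 • (X k 1) ^ 2 + m13 • (X k 2) ^ 2} := by
    ext x
    rw [hu, Submodule.mem_span_singleton]
    change x ∈ (deg k 1).map D.d ↔ _
    rw [Submodule.mem_map]
    constructor
    · rintro ⟨y, hy, rfl⟩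
      obtain ⟨a, b, c, rfl⟩ := mem_deg_one.1 hy
      exact ⟨_, (d_lin D hd a b c).symm⟩
    · rintro ⟨a, rfl⟩
      refine ⟨lin a 0 0, mem_deg_one.2 ⟨a, 0, 0, rfl⟩, ?_⟩
      simp [d_lin D hd]
  refine ⟨⟨hZ1, ?_⟩, ⟨hZ2, ?_⟩, hB2, ?_⟩
  · have li : LinearIndependent k ![l1 • X k 0 - X k 1, l2 • X k 0 - X k 2] := by
      rw [LinearIndependent.pair_iff]
      intro s t h
      have e : lin (l1 * s + l2 * t) (-s) (-t) = 0 := by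
        rw [← h]; simp only [lin]; module
      obtain ⟨-, hs, ht⟩ := lin_indep e
      exact ⟨neg_eq_zero.1 hs, neg_eq_zero.1 ht⟩
    have hr : Set.range ![l1 • X k 0 - X k 1, l2 • X k 0 - X k 2] =
        {l1 • X k 0 - X k 1, l2 • X k 0 - X k 2} := by
      simp only [Matrix.range_cons, Matrix.range_empty, Set.singleton_union, Set.union_empty]
    rw [hZ1, ← hr, finrank_span_eq_card li, Fintype.card_fin]
  · have li : LinearIndependent k ![(X k 0) ^ 2, (X k 1) ^ 2, (X k 2) ^ 2,
        l2 • (X k 0 * X k 1) - l1 • (X k 0 * X k 2) + X k 1 * X k 2] := by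
      rw [Fintype.linearIndependent_iff]
      intro g h
      simp only [Fin.sum_univ_four, Matrix.cons_val] at h
      have e : quad (g 0) (g 1) (g 2) (l2 * g 3) (-(l1 * g 3)) (g 3) = 0 := by
        rw [← h]; simp only [quad]; module
      obtain ⟨h0, h1, h2, -, -, h3⟩ := quad_indep e
      intro i
      fin_cases i <;> assumption
    have hr : Set.range ![(X k 0) ^ 2, (X k 1) ^ 2, (X k 2) ^ 2,
        l2 • (X k 0 * X k 1) - l1 • (X k 0 * X k 2) + X k 1 * X k 2] =
        {(X k 0) ^ 2, (X k 1) ^ 2, (X k 2) ^ 2,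
          l2 • (X k 0 * X k 1) - l1 • (X k 0 * X k 2) + X k 1 * X k 2} := by
      simp only [Matrix.range_cons, Matrix.range_empty, Set.singleton_union, Set.union_empty]
    rw [hZ2, ← hr, finrank_span_eq_card li, Fintype.card_fin]
  · rw [hB2, hu]
    exact finrank_span_singleton hu0
end
end
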